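/- For n ≥ 4, the 2-cocycle c represents a non-trivial class in H²(S_n, Z/2Z): there is no function f : S_n → Z/2Z such that c(x,y) = f(x) + f(y) + f(x·y) for all x, y ∈ S_n. -/

import Mathlib

open Equiv
open scoped Classical

/-- Generator `z` as an element of the free group. -/
def zF (n : ℕ) : FreeGroup (Fin (n-1) ⊕ Unit) := FreeGroup.of (Sum.inr ())

/-- Generator `τ̃ᵢ` as an element of the free group. -/
def tF (n : ℕ) (i : Fin (n-1)) : FreeGroup (Fin (n-1) ⊕ Unit) := FreeGroup.of (Sum.inl i)

/-- Relations of the spin extension of the symmetric group. -/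
def spinRels (n : ℕ) : Set (FreeGroup (Fin (n-1) ⊕ Unit)) :=
  {zF n * zF n} ∪
  {w | ∃ i : Fin (n-1), w = zF n * tF n i * (tF n i * zF n)⁻¹} ∪
  {w | ∃ i : Fin (n-1), w = tF n i * tF n i * (zF n)⁻¹} ∪
  {w | ∃ i j : Fin (n-1), 1 < |(i : ℤ) - (j : ℤ)| ∧ w = tF n i * tF n j * (zF n * tF n j * tF n i)⁻¹} ∪
  {w | ∃ i j : Fin (n-1), (j : ℕ) = (i : ℕ) + 1 ∧
        w = tF n i * tF n j * tF n i * (tF n j * tF n i * tF n j)⁻¹}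

/-- The spin extension `S̃ₙ` of the symmetric group, as a presented group. -/
abbrev SpinSym (n : ℕ) := PresentedGroup (spinRels n)

/-- The central element `z` of `S̃ₙ`. -/
def zt (n : ℕ) : SpinSym n := PresentedGroup.of (Sum.inr ())

/-- The generator `τ̃ᵢ` of `S̃ₙ`. -/
def tt (n : ℕ) (i : Fin (n-1)) : SpinSym n := PresentedGroup.of (Sum.inl i)

/-- `i` as an element of `Fin n`. -/
def finL (n : ℕ) (i : Fin (n-1)) : Fin n := ⟨i, by have := i.2; omega⟩

/-- `i+1` as an element of `Fin n`. -/
def finR (n : ℕ) (i : Fin (n-1)) : Fin n := ⟨(i : ℕ) + 1, by have := i.2; omega⟩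

/-- `τ̃ₖ` for a natural number index, `1` out of range. -/
def ttN (n : ℕ) (k : ℕ) : SpinSym n := if h : k < n - 1 then tt n ⟨k, h⟩ else 1

/-- For `i ≤ j`, the word `τ̃ᵢ·τ̃ᵢ₊₁⋯τ̃ⱼ₋₂·τ̃ⱼ₋₁·τ̃ⱼ₋₂⋯τ̃ᵢ₊₁·τ̃ᵢ` (equal to `1` when `i = j`). -/
def ttilCore (n i j : ℕ) : SpinSym n :=
  (((List.range' i (j - i)) ++ (List.range' i (j - 1 - i)).reverse).map (ttN n)).prod

/-- The lifted transpositions `τ̃_{i,j}`, with `τ̃_{j,i} = z·τ̃_{i,j}` for `i < j`,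
and `τ̃_{k,k} = 1`. -/
def ttil (n i j : ℕ) : SpinSym n := if j < i then zt n * ttilCore n j i else ttilCore n i j

/-- `i` is the sequence of indices of a factorization of `x` as a product of
transpositions `t_{i_0,0} ⋯ t_{i_{n-1},n-1}` with `i_k ≤ k`. -/
def IsFactorization (n : ℕ) (x : Equiv.Perm (Fin n)) (i : Fin n → Fin n) : Prop :=
  (∀ k, i k ≤ k) ∧ x = ((List.finRange n).map (fun k => Equiv.swap (i k) k)).prod

/-- The section `s : Sₙ → S̃ₙ`, defined from the unique factorization
`x = t_{i_0,0} ⋯ t_{i_{n-1},n-1}` by `s x = τ̃_{i_0,0} ⋯ τ̃_{i_{n-1},n-1}`. -/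
noncomputable def sec (n : ℕ) (x : Equiv.Perm (Fin n)) : SpinSym n :=
  if h : ∃ i, IsFactorization n x i then
    ((List.finRange n).map (fun k => ttil n (h.choose k).val k.val)).prod
  else 1

/-- The `2`-cocycle `c : Sₙ × Sₙ → ℤ/2ℤ` defined by `s(x)·s(y) = z^{c(x,y)}·s(x·y)`. -/
noncomputable def coc (n : ℕ) (x y : Equiv.Perm (Fin n)) : ZMod 2 :=
  if sec n x * sec n y = sec n (x * y) then 0 else 1

/-!
If the class of `c` were trivial, the extension would split, so every involution of `Sₙ` would lift
to an element of square `1`. But the lift `τ̃₀` of the transposition `(0 1)` has square `z`, and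
`z ≠ 1`: in the Clifford algebra of the root lattice of type `Aₙ₋₁`, scaled so that simple roots
square to `-1`, the simple roots satisfy the relations of the `τ̃ᵢ` with `-1` in the role of `z`.
-/

theorem prod_map_eq_of_nodup {α M : Type*} [Monoid M] {l : List α} {g : α → M} {k : α}
    (hl : l.Nodup) (hk : k ∈ l) (hg : ∀ a, a ≠ k → a ∈ l → g a = 1) :
    (l.map g).prod = g k := by
  classical
  rw [List.prod_map_eq_pow_single k g hg, List.count_eq_one_of_mem hl hk, pow_one]

section Factorization

variable {α : Type*} [Preorder α] [DecidableEq α] {i j : α → α}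

theorem prod_map_swap_concat_apply (hi : ∀ k, i k ≤ k) {l : List α} {m : α}
    (hl : ∀ k ∈ l, k < m) : ((l ++ [m]).map fun k => swap (i k) k).prod (i m) = m := by
  have hfix : (l.map fun k => swap (i k) k).prod ∈ MulAction.stabilizer (Perm α) m := by
    refine Subgroup.list_prod_mem _ (List.forall_mem_map.2 fun k hk => ?_)
    exact swap_apply_of_ne_of_ne ((hi k).trans_lt (hl k hk)).ne' (hl k hk).ne'
  rw [List.map_append, List.prod_append, List.map_singleton, List.prod_singleton,
    Perm.mul_apply, swap_apply_left]
  exact hfix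

theorem forall_mem_eq_of_prod_map_swap_eq (hi : ∀ k, i k ≤ k) (hj : ∀ k, j k ≤ k) {l : List α}
    (hl : l.Pairwise (· < ·))
    (h : (l.map fun k => swap (i k) k).prod = (l.map fun k => swap (j k) k).prod) :
    ∀ k ∈ l, i k = j k := by
  induction l using List.reverseRecOn with
  | nil => simp
  | append_singleton l m ih =>
    obtain ⟨hl, -, hlt⟩ := List.pairwise_append.1 hl
    replace hlt : ∀ k ∈ l, k < m := fun k hk => hlt k hk m (List.mem_singleton_self m)
    have hm : i m = j m := by
      apply (List.map (fun k => swap (i k) k) (l ++ [m])).prod.injective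
      rw [prod_map_swap_concat_apply hi hlt, h, prod_map_swap_concat_apply hj hlt]
    have hprefix : (l.map fun k => swap (i k) k).prod = (l.map fun k => swap (j k) k).prod := by
      simpa only [List.map_append, List.prod_append, List.map_singleton, hm, mul_left_inj] using h
    exact List.forall_mem_append.2 ⟨ih hl hprefix, List.forall_mem_singleton.2 hm⟩

end Factorization

section SpinSection

variable {n : ℕ}

theorem IsFactorization.unique {x : Perm (Fin n)} {i j : Fin n → Fin n}
    (hi : IsFactorization n x i) (hj : IsFactorization n x j) : i = j :=
  funext fun k => forall_mem_eq_of_prod_map_swap_eq hi.1 hj.1 (List.pairwise_lt_finRange n)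
    (hi.2.symm.trans hj.2) k (List.mem_finRange k)

theorem IsFactorization.sec_eq {x : Perm (Fin n)} {i : Fin n → Fin n}
    (hi : IsFactorization n x i) :
    sec n x = ((List.finRange n).map fun k => ttil n (i k) k).prod := by
  have h : ∃ i, IsFactorization n x i := ⟨i, hi⟩
  rw [sec, dif_pos h, h.choose_spec.unique hi]

theorem isFactorization_one : IsFactorization n 1 id :=
  ⟨fun _ => le_rfl, by simp [← Perm.one_def]⟩

theorem isFactorization_swap {i k : Fin n} (h : i ≤ k) :
    IsFactorization n (swap i k) (Function.update id k i) := by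
  refine ⟨fun l => ?_, ?_⟩
  · rcases eq_or_ne l k with rfl | hl
    · rwa [Function.update_self]
    · rw [Function.update_of_ne hl, id]
  · rw [prod_map_eq_of_nodup (List.nodup_finRange n) (List.mem_finRange k), Function.update_self]
    intro l hl _
    rw [Function.update_of_ne hl, id, swap_self, Perm.one_def]

theorem ttil_self (n k : ℕ) : ttil n k k = 1 := by
  simp [ttil, ttilCore, show k - 1 - k = 0 by omega]

theorem ttil_succ (i : Fin (n - 1)) : ttil n i (i + 1) = tt n i := by
  simp [ttil, ttilCore, ttN]

theorem sec_one : sec n 1 = 1 := by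
  simp [isFactorization_one.sec_eq, ttil_self]

theorem sec_swap {i k : Fin n} (h : i ≤ k) : sec n (swap i k) = ttil n i k := by
  rw [(isFactorization_swap h).sec_eq,
    prod_map_eq_of_nodup (List.nodup_finRange n) (List.mem_finRange k), Function.update_self]
  intro l hl _
  rw [Function.update_of_ne hl, id, ttil_self]

theorem sec_swap_finL_finR (i : Fin (n - 1)) : sec n (swap (finL n i) (finR n i)) = tt n i :=
  (sec_swap (Nat.le_succ i)).trans (ttil_succ i)

theorem coc_eq_zero_iff {x y : Perm (Fin n)} :
    coc n x y = 0 ↔ sec n x * sec n y = sec n (x * y) := by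
  simp [coc]

theorem sec_mul_self_of_coboundary {f : Perm (Fin n) → ZMod 2}
    (hf : ∀ x y, coc n x y = f x + f y + f (x * y)) {x : Perm (Fin n)} (hx : x * x = 1) :
    sec n x * sec n x = 1 := by
  have hcoc {y : Perm (Fin n)} (hy : y * y = 1) : coc n y y = f 1 := by
    rw [hf, hy, CharTwo.add_self_eq_zero, zero_add]
  have hf1 : f 1 = 0 := by
    rw [← hcoc (mul_one 1), coc_eq_zero_iff, mul_one, sec_one, mul_one]
  rw [coc_eq_zero_iff.1 ((hcoc hx).trans hf1), hx, sec_one]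

end SpinSection

section GramMatrix

variable {R ι : Type*} [CommRing R] [Fintype ι] [DecidableEq ι] (A : Matrix ι ι R) (i j : ι)

theorem toQuadraticForm'_single : A.toQuadraticForm' (Pi.single i 1) = A i i := by
  simp [Matrix.toQuadraticForm', Matrix.toLinearMap₂'_apply']

theorem polar_toQuadraticForm'_single :
    QuadraticMap.polar A.toQuadraticForm' (Pi.single i 1) (Pi.single j 1) = A i j + A j i := by
  simp [Matrix.toQuadraticForm', LinearMap.BilinMap.polar_toQuadraticMap,
    Matrix.toLinearMap₂'_apply']

end GramMatrix

theorem clifford_braid_of_polar_eq_neg {R M : Type*} [CommRing R] [AddCommGroup M] [Module R M]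
    {Q : QuadraticForm R M} {v w : M} (hQ : Q v = Q w) (hvw : QuadraticMap.polar Q v w = -Q v) :
    CliffordAlgebra.ι Q v * CliffordAlgebra.ι Q w * CliffordAlgebra.ι Q v =
      CliffordAlgebra.ι Q w * CliffordAlgebra.ι Q v * CliffordAlgebra.ι Q w := by
  rw [CliffordAlgebra.ι_mul_ι_mul_ι, CliffordAlgebra.ι_mul_ι_mul_ι, QuadraticMap.polar_comm Q w v,
    hvw, ← hQ]
  congr 1
  module

section SpinRepresentation

variable {n : ℕ}

/-- The quadratic form on the rational span of the root lattice of type `Aₙ₋₁`, in the basis of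
simple roots, normalized so that simple roots have value `-1`. -/
noncomputable def rootForm (n : ℕ) : QuadraticForm ℚ (Fin (n - 1) → ℚ) :=
  (-(1 / 2 : ℚ) • (CartanMatrix.A (n - 1)).map (Int.cast : ℤ → ℚ)).toQuadraticForm'

theorem rootForm_single (i : Fin (n - 1)) : rootForm n (Pi.single i 1) = -1 := by
  rw [rootForm, toQuadraticForm'_single]
  simp [CartanMatrix.A]

theorem polar_rootForm_single (i j : Fin (n - 1)) :
    QuadraticMap.polar (rootForm n) (Pi.single i 1) (Pi.single j 1) =
      -(CartanMatrix.A (n - 1) i j : ℚ) := by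
  rw [rootForm, polar_toQuadraticForm'_single]
  simp only [Matrix.smul_apply, Matrix.map_apply, smul_eq_mul, (CartanMatrix.A_isSymm _).apply i j]
  ring

/-- The `i`-th simple root as a vector of the Clifford algebra: the image of `τ̃ᵢ` under the spin
representation. -/
noncomputable def cliffordRoot (i : Fin (n - 1)) : CliffordAlgebra (rootForm n) :=
  CliffordAlgebra.ι (rootForm n) (Pi.single i 1)

theorem cliffordRoot_mul_self (i : Fin (n - 1)) : cliffordRoot i * cliffordRoot i = -1 := by
  rw [cliffordRoot, CliffordAlgebra.ι_sq_scalar, rootForm_single, map_neg, map_one]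

theorem cliffordRoot_anticomm {i j : Fin (n - 1)} (h : 1 < |(i : ℤ) - (j : ℤ)|) :
    cliffordRoot i * cliffordRoot j = -(cliffordRoot j * cliffordRoot i) := by
  have hA : CartanMatrix.A (n - 1) i j = 0 := by
    simp only [CartanMatrix.A, Matrix.of_apply, Fin.ext_iff]
    grind
  rw [eq_neg_iff_add_eq_zero, cliffordRoot, cliffordRoot, CliffordAlgebra.ι_mul_ι_add_swap,
    polar_rootForm_single, hA, Int.cast_zero, neg_zero, map_zero]

theorem cliffordRoot_braid {i j : Fin (n - 1)} (h : (j : ℕ) = (i : ℕ) + 1) :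
    cliffordRoot i * cliffordRoot j * cliffordRoot i =
      cliffordRoot j * cliffordRoot i * cliffordRoot j := by
  have hA : CartanMatrix.A (n - 1) i j = -1 := by
    simp [CartanMatrix.A, Fin.ext_iff, h]
  apply clifford_braid_of_polar_eq_neg
  · rw [rootForm_single, rootForm_single]
  · rw [polar_rootForm_single, hA, rootForm_single, Int.cast_neg, Int.cast_one]

/-- `cliffordRoot i` as a unit; its inverse is its negative because it squares to `-1`. -/
noncomputable def cliffordRootUnit (i : Fin (n - 1)) : (CliffordAlgebra (rootForm n))ˣ where
  val := cliffordRoot i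
  inv := -cliffordRoot i
  val_inv := by rw [mul_neg, cliffordRoot_mul_self, neg_neg]
  inv_val := by rw [neg_mul, cliffordRoot_mul_self, neg_neg]

theorem lift_cliffordRootUnit_eq_one_of_mem_spinRels : ∀ r ∈ spinRels n,
    FreeGroup.lift (Sum.elim (cliffordRootUnit (n := n)) fun _ => -1) r = 1 := by
  rintro r ((((rfl | ⟨i, rfl⟩) | ⟨i, rfl⟩) | ⟨i, j, h, rfl⟩) | ⟨i, j, h, rfl⟩)
  · simp [zF]
  · simp [zF, tF]
  all_goals
    simp only [map_mul, map_inv, mul_inv_eq_one]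
    ext
  · simpa [zF, tF, cliffordRootUnit] using cliffordRoot_mul_self i
  · simpa [zF, tF, cliffordRootUnit] using cliffordRoot_anticomm h
  · simpa [zF, tF, cliffordRootUnit] using cliffordRoot_braid h

/-- The spin representation of `S̃ₙ`, sending `τ̃ᵢ` to the `i`-th simple root and `z` to `-1`. -/
noncomputable def spinRep (n : ℕ) : SpinSym n →* (CliffordAlgebra (rootForm n))ˣ :=
  PresentedGroup.toGroup lift_cliffordRootUnit_eq_one_of_mem_spinRels

theorem spinRep_zt : spinRep n (zt n) = -1 :=
  PresentedGroup.toGroup.of lift_cliffordRootUnit_eq_one_of_mem_spinRels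

theorem zt_ne_one (n : ℕ) : zt n ≠ 1 := by
  intro hz
  have hneg : (-1 : (CliffordAlgebra (rootForm n))ˣ) = 1 := by
    rw [← spinRep_zt, hz, map_one]
  have : IsAddTorsionFree (CliffordAlgebra (rootForm n)) := .of_module_rat _
  exact neg_ne_self.2 one_ne_zero (congrArg Units.val hneg)

theorem tt_mul_self (i : Fin (n - 1)) : tt n i * tt n i = zt n :=
  PresentedGroup.mk_eq_mk_of_mul_inv_mem <| .inl <| .inl <| .inr ⟨i, rfl⟩

end SpinRepresentation

theorem cocycle_nontrivial_general (n : ℕ) (hn : 2 ≤ n) :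
    ¬ ∃ f : Equiv.Perm (Fin n) → ZMod 2,
        ∀ x y : Equiv.Perm (Fin n), coc n x y = f x + f y + f (x * y) := by
  rintro ⟨f, hf⟩
  let i : Fin (n - 1) := ⟨0, by omega⟩
  apply zt_ne_one n
  calc zt n = tt n i * tt n i := (tt_mul_self i).symm
    _ = sec n (swap (finL n i) (finR n i)) * sec n (swap (finL n i) (finR n i)) := by
      rw [sec_swap_finL_finR]
    _ = 1 := sec_mul_self_of_coboundary hf (swap_mul_self _ _)

theorem cocycle_nontrivial (n : ℕ) (hn : 4 ≤ n) :
    ¬ ∃ f : Equiv.Perm (Fin n) → ZMod 2,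
        ∀ x y : Equiv.Perm (Fin n), coc n x y = f x + f y + f (x * y) :=
  cocycle_nontrivial_general n (by omega)
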